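/- Let d ≥ 3, let B ⊂ ℝ^d be a bounded star-shaped body with vol(B) > 0, and let E₀(R) = #(RB ∩ ℤ^d) − vol(B) R^d and E₁(R) = #(RB ∩ Ẑ^d) − (vol(B)/ζ(d)) R^d. For any 1 < α ≤ d, E₀(R) = o(R^α) as R → ∞ if and only if E₁(R) = o(R^α) as R → ∞. -/

import Mathlib

/-!
The equivalence is a two-sided Dirichlet-convolution argument. For `R > 0` every nonzero integer
point of `R • B` is uniquely `k • y` with `k ≥ 1` (the gcd of its coordinates) and `y` a primitive
point of `(R / k) • B` (`hasSum_primitive`). Subtracting the main terms, which match because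
`∑ k, (R / k) ^ d = ζ(d) * R ^ d`, gives `E₀ R - c = ∑ k, E₁ (R / k)`, where `c ∈ {0, 1}` accounts
for the origin. Since `|E₁ r| ≤ C * r ^ d` for all `r > 0` (by `card_le`, as `R • B` contains no
nonzero integer point for small `R`), Möbius inversion is absolutely convergent and gives
`E₁ R = ∑ k, μ k * (E₀ (R / k) - c)` (`moebius_inversion`).

Both directions then follow from `isLittleO_tsum`: if `f = o(R ^ α)` and `f r = O(r ^ d)` on the
whole of `(0, ∞)`, then for `1 < β < α` and every `ε > 0` one has
`|f r| ≤ ε * r ^ α + K * r ^ β` for all `r > 0`, and summing over `r = R / k` costs only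
the constants `ζ(α)` and `ζ(β)`.
-/

open MeasureTheory Pointwise Asymptotics Filter

open scoped ArithmeticFunction.Moebius

namespace PrimitivePoints

/-! ### Dilation sums and Möbius inversion -/

lemma summable_pnat_rpow {β : ℝ} (hβ : 1 < β) :
    Summable fun k : ℕ+ => ((k : ℕ) : ℝ) ^ (-β) :=
  (Real.summable_nat_rpow.2 (by linarith)).comp_injective PNat.coe_injective

lemma summable_pnat_pow {d : ℕ} (hd : 2 ≤ d) :
    Summable fun k : ℕ+ => (1 / ((k : ℕ) : ℝ) ^ d) :=
  (Real.summable_one_div_nat_pow.2 (by omega)).comp_injective PNat.coe_injective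

lemma summable_dilate {d : ℕ} (hd : 2 ≤ d) {f : ℝ → ℝ} {C : ℝ}
    (hC : ∀ r, 0 < r → |f r| ≤ C * r ^ d) {R : ℝ} (hR : 0 < R) :
    Summable fun k : ℕ+ => f (R / (k : ℕ)) := by
  refine Summable.of_norm_bounded ((summable_pnat_pow hd).mul_left (C * R ^ d)) fun k => ?_
  have hk : (0 : ℝ) < (k : ℕ) := by exact_mod_cast k.pos
  refine (hC _ (div_pos hR hk)).trans (le_of_eq ?_)
  rw [div_pow]; ring

/-- Dilation sums with bounded coefficients preserve `o(R ^ α)` when `α > 1`, provided the function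
is `O(r ^ d)` uniformly down to `r = 0`. -/
lemma isLittleO_tsum {d : ℕ} {α : ℝ} (hα : 1 < α) (hαd : α ≤ d) {f : ℝ → ℝ} {C : ℝ}
    (hC : ∀ r, 0 < r → |f r| ≤ C * r ^ d) (a : ℕ+ → ℝ) (ha : ∀ k, |a k| ≤ 1)
    (hf : f =o[atTop] fun R : ℝ => R ^ α) :
    (fun R : ℝ => ∑' k : ℕ+, a k * f (R / (k : ℕ))) =o[atTop] fun R : ℝ => R ^ α := by
  obtain ⟨β, hβ1, hβα⟩ := exists_between hα
  have hC0 : 0 ≤ C := by simpa using (abs_nonneg _).trans (hC 1 one_pos)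
  set Zα := ∑' k : ℕ+, ((k : ℕ) : ℝ) ^ (-α) with hZα
  set Zβ := ∑' k : ℕ+, ((k : ℕ) : ℝ) ^ (-β) with hZβ
  have hZα0 : 0 ≤ Zα := tsum_nonneg fun k => by positivity
  rw [isLittleO_iff]
  intro c hc
  obtain ⟨ε, hε, hεc⟩ : ∃ ε : ℝ, 0 < ε ∧ ε * Zα ≤ c / 2 := by
    refine ⟨c / 2 / (Zα + 1), by positivity, ?_⟩
    rw [div_mul_eq_mul_div, div_le_iff₀ (by positivity)]
    nlinarith
  obtain ⟨R₀, hR₀1, hR₀⟩ : ∃ R₀ : ℝ, 1 ≤ R₀ ∧ ∀ r, R₀ ≤ r → |f r| ≤ ε * r ^ α := by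
    obtain ⟨R₁, h₁⟩ := eventually_atTop.1 (isLittleO_iff.1 hf hε)
    refine ⟨max R₁ 1, le_max_right _ _, fun r hr => ?_⟩
    have hr0 : 0 < r := lt_of_lt_of_le one_pos ((le_max_right _ _).trans hr)
    have := h₁ r ((le_max_left _ _).trans hr)
    rwa [Real.norm_eq_abs, Real.norm_eq_abs, abs_of_pos (Real.rpow_pos_of_pos hr0 _)] at this
  set K := C * R₀ ^ ((d : ℝ) - β) with hK
  have hK0 : 0 ≤ K := by positivity
  have hbound : ∀ r, 0 < r → |f r| ≤ ε * r ^ α + K * r ^ β := by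
    intro r hr
    rcases le_or_gt R₀ r with h | h
    · have : 0 ≤ K * r ^ β := by positivity
      linarith [hR₀ r h]
    · have h1 : r ^ d = r ^ ((d : ℝ) - β) * r ^ β := by
        rw [← Real.rpow_add hr, sub_add_cancel, Real.rpow_natCast]
      have h2 : r ^ ((d : ℝ) - β) ≤ R₀ ^ ((d : ℝ) - β) :=
        Real.rpow_le_rpow hr.le h.le (by linarith)
      have h3 : C * r ^ d ≤ K * r ^ β := by
        rw [h1, hK, mul_assoc]
        gcongr
      have : 0 ≤ ε * r ^ α := by positivity
      linarith [hC r hr]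
  have hlow : (fun R : ℝ => R ^ β) =o[atTop] fun R : ℝ => R ^ α := by
    refine (isLittleO_iff_tendsto' ?_).2 ?_
    · filter_upwards [eventually_gt_atTop 0] with R hR h
      exact absurd h (Real.rpow_pos_of_pos hR _).ne'
    · refine (tendsto_rpow_neg_atTop (sub_pos.2 hβα)).congr' ?_
      filter_upwards [eventually_gt_atTop 0] with R hR
      rw [neg_sub, Real.rpow_sub hR]
  have hlow' := isLittleO_iff.1 (hlow.const_mul_left (K * Zβ)) (half_pos hc)
  filter_upwards [hlow', eventually_gt_atTop 0] with R h1 hR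
  have hRα : 0 < R ^ α := Real.rpow_pos_of_pos hR _
  rw [Real.norm_eq_abs, Real.norm_eq_abs, abs_of_pos hRα] at h1
  rw [Real.norm_eq_abs, Real.norm_eq_abs, abs_of_pos hRα]
  have hs : HasSum (fun k : ℕ+ => ε * R ^ α * ((k : ℕ) : ℝ) ^ (-α)
      + K * R ^ β * ((k : ℕ) : ℝ) ^ (-β)) (ε * R ^ α * Zα + K * R ^ β * Zβ) :=
    ((summable_pnat_rpow hα).hasSum.mul_left _).add
      ((summable_pnat_rpow hβ1).hasSum.mul_left _)
  have hle : |∑' k : ℕ+, a k * f (R / (k : ℕ))| ≤ ε * R ^ α * Zα + K * R ^ β * Zβ := by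
    rw [← Real.norm_eq_abs]
    refine tsum_of_norm_bounded hs fun k => ?_
    have hk : (0 : ℝ) < (k : ℕ) := by exact_mod_cast k.pos
    rw [Real.norm_eq_abs, abs_mul]
    calc |a k| * |f (R / (k : ℕ))| ≤ 1 * |f (R / (k : ℕ))| := by gcongr; exact ha k
      _ ≤ ε * (R / (k : ℕ)) ^ α + K * (R / (k : ℕ)) ^ β := by
        rw [one_mul]; exact hbound _ (div_pos hR hk)
      _ = _ := by
        rw [Real.div_rpow hR.le hk.le, Real.div_rpow hR.le hk.le, Real.rpow_neg hk.le,
          Real.rpow_neg hk.le]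
        ring
  have h2 : K * R ^ β * Zβ ≤ c / 2 * R ^ α := by
    calc K * R ^ β * Zβ = K * Zβ * R ^ β := by ring
      _ ≤ _ := (le_abs_self _).trans h1
  have h3 : ε * R ^ α * Zα ≤ c / 2 * R ^ α := by
    calc ε * R ^ α * Zα = ε * Zα * R ^ α := by ring
      _ ≤ _ := by gcongr
  linarith

lemma abs_moebius_le_one (k : ℕ+) : |((μ (k : ℕ) : ℤ) : ℝ)| ≤ 1 := by
  exact_mod_cast ArithmeticFunction.abs_moebius_le_one

/-- Möbius inversion for dilation sums `g R = ∑ k, f (R / k)`; the bound on `f` makes the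
double series absolutely convergent. -/
lemma moebius_inversion {d : ℕ} (hd : 2 ≤ d) {f g : ℝ → ℝ} {C : ℝ}
    (hC : ∀ r, 0 < r → |f r| ≤ C * r ^ d)
    (hg : ∀ r, 0 < r → g r = ∑' k : ℕ+, f (r / (k : ℕ))) {R : ℝ} (hR : 0 < R) :
    ∑' k : ℕ+, ((μ (k : ℕ) : ℤ) : ℝ) * g (R / (k : ℕ)) = f R := by
  have hpos : ∀ k : ℕ+, (0 : ℝ) < (k : ℕ) := fun k => by exact_mod_cast k.pos
  let F : ℕ+ × ℕ+ → ℝ := fun p => ((μ (p.1 : ℕ) : ℤ) : ℝ) * f (R / (p.1 : ℕ) / (p.2 : ℕ))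
  have hF : Summable F := by
    have hs := (summable_pnat_pow hd).mul_of_nonneg (summable_pnat_pow hd)
      (fun k => by positivity) (fun k => by positivity)
    refine Summable.of_norm_bounded (hs.mul_left (C * R ^ d)) fun p => ?_
    rw [Real.norm_eq_abs, abs_mul]
    calc _ ≤ 1 * |f (R / (p.1 : ℕ) / (p.2 : ℕ))| := by
          gcongr; exact abs_moebius_le_one _
      _ ≤ C * (R / (p.1 : ℕ) / (p.2 : ℕ)) ^ d := by
          rw [one_mul]; exact hC _ (div_pos (div_pos hR (hpos _)) (hpos _))
      _ = _ := by rw [div_pow, div_pow]; ring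
  have h1 : ∑' k : ℕ+, ((μ (k : ℕ) : ℤ) : ℝ) * g (R / (k : ℕ)) = ∑' p, F p := by
    rw [hF.tsum_prod]
    refine tsum_congr fun k => ?_
    rw [hg _ (div_pos hR (hpos k)), ← tsum_mul_left]
  have hF' := (sigmaAntidiagonalEquivProd.summable_iff (f := F)).2 hF
  rw [h1, ← sigmaAntidiagonalEquivProd.tsum_eq F,
    Summable.tsum_sigma (f := fun c => F (sigmaAntidiagonalEquivProd c)) hF']
  have h2 : ∀ n : ℕ+, (∑' c : (n : ℕ).divisorsAntidiagonal,
      F (sigmaAntidiagonalEquivProd ⟨n, c⟩)) = if n = 1 then f R else 0 := by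
    intro n
    have h3 : ∀ c : (n : ℕ).divisorsAntidiagonal, F (sigmaAntidiagonalEquivProd ⟨n, c⟩)
        = ((μ c.1.1 : ℤ) : ℝ) * f (R / (n : ℕ)) := by
      rintro ⟨⟨a, b⟩, hab⟩
      have h := (Nat.mem_divisorsAntidiagonal.1 hab).1
      simp only [F, sigmaAntidiagonalEquivProd, divisorsAntidiagonalFactors, Equiv.coe_fn_mk,
        PNat.mk_coe]
      rw [div_div, ← h, Nat.cast_mul]
    have h4 : ∑ c ∈ (n : ℕ).divisorsAntidiagonal, ((μ c.1 : ℤ) : ℝ)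
        = if (n : ℕ) = 1 then 1 else 0 := by
      have h := congrArg (fun h : ArithmeticFunction ℤ => h n)
        ArithmeticFunction.moebius_mul_coe_zeta
      rw [ArithmeticFunction.mul_apply, ArithmeticFunction.one_apply] at h
      have h' : ∑ c ∈ (n : ℕ).divisorsAntidiagonal, μ c.1 = if (n : ℕ) = 1 then 1 else 0 := by
        rw [← h]
        refine Finset.sum_congr rfl fun c hc => ?_
        have : c.2 ≠ 0 := (Nat.ne_zero_of_mem_divisorsAntidiagonal hc).2
        simp [this]
      exact_mod_cast h'
    rw [tsum_congr h3, tsum_mul_right, Finset.tsum_subtype (n : ℕ).divisorsAntidiagonal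
      (fun c : ℕ × ℕ => ((μ c.1 : ℤ) : ℝ)), h4]
    by_cases hn : n = 1
    · subst hn; simp
    · simp [hn]
  rw [tsum_congr h2, tsum_ite_eq]

/-! ### Counting lattice points -/

/-- The gcd of the coordinates of an integer vector. -/
def content {d : ℕ} (x : Fin d → ℤ) : ℕ := Finset.univ.gcd fun i => (x i).natAbs

lemma content_eq_zero {d : ℕ} {x : Fin d → ℤ} : content x = 0 ↔ x = 0 := by
  simp [content, Finset.gcd_eq_zero_iff, funext_iff]

lemma content_smul {d : ℕ} (k : ℕ) (x : Fin d → ℤ) :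
    content (fun i => (k : ℤ) * x i) = k * content x := by
  simp [content, Int.natAbs_mul, Finset.gcd_mul_left]

lemma content_dvd {d : ℕ} (x : Fin d → ℤ) (i : Fin d) : (content x : ℤ) ∣ x i :=
  Int.natCast_dvd.2 (Finset.gcd_dvd (Finset.mem_univ i))

/-- The nonzero integer points of `R • B`. -/
def latticePts {d : ℕ} (B : Set (Fin d → ℝ)) (R : ℝ) : Set (Fin d → ℤ) :=
  {x | x ≠ 0 ∧ (fun i => (x i : ℝ)) ∈ R • B}

/-- The primitive integer points of `R • B`. -/
def primPts {d : ℕ} (B : Set (Fin d → ℝ)) (R : ℝ) : Set (Fin d → ℤ) :=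
  {x | x ≠ 0 ∧ Finset.univ.gcd (fun i => (x i).natAbs) = 1 ∧ (fun i => (x i : ℝ)) ∈ R • B}

/-- The bound has no additive constant because `R • B` has no nonzero integer point when
`R * M < 1`. -/
lemma card_le {d : ℕ} {B : Set (Fin d → ℝ)} {M : ℝ} (hM : 0 < M)
    (hB : ∀ x ∈ B, ∀ i, |x i| ≤ M) {R : ℝ} (hR : 0 < R) :
    (latticePts B R).Finite ∧ ((latticePts B R).ncard : ℝ) ≤ (3 * M) ^ d * R ^ d := by
  have hRM : 0 < R * M := mul_pos hR hM
  have hcoord : ∀ x ∈ latticePts B R, ∀ i, |((x i : ℤ) : ℝ)| ≤ R * M := by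
    rintro x ⟨-, y, hy, hyx⟩ i
    have : (x i : ℝ) = R * y i := (congrFun hyx i).symm
    rw [this, abs_mul, abs_of_pos hR]
    gcongr
    exact hB y hy i
  set m : ℕ := ⌊R * M⌋₊ with hm
  have hsub : latticePts B R ⊆
      (Finset.Icc (fun _ => -(m : ℤ)) (fun _ => (m : ℤ)) : Finset (Fin d → ℤ)) := by
    intro x hx
    have h : ∀ i, |x i| ≤ (m : ℤ) := by
      intro i
      have h1 := hcoord x hx i
      have h2 : (((x i).natAbs : ℕ) : ℝ) ≤ R * M := by
        rwa [Nat.cast_natAbs, Int.cast_abs]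
      have h3 := Nat.le_floor h2
      rw [← hm] at h3
      rw [Int.abs_eq_natAbs]
      exact_mod_cast h3
    rw [Finset.coe_Icc, Set.mem_Icc, Pi.le_def, Pi.le_def]
    exact ⟨fun i => (abs_le.1 (h i)).1, fun i => (abs_le.1 (h i)).2⟩
  refine ⟨(Finset.finite_toSet _).subset hsub, ?_⟩
  rcases lt_or_ge (R * M) 1 with h | h
  · have : latticePts B R = ∅ := by
      rw [Set.eq_empty_iff_forall_notMem]
      intro x hx
      refine hx.1 (funext fun i => ?_)
      have h1 := (hcoord x hx i).trans_lt h
      have h2 : |x i| < 1 := by exact_mod_cast h1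
      exact Int.abs_lt_one_iff.1 h2
    rw [this, Set.ncard_empty, Nat.cast_zero]
    positivity
  · have h1 := Set.ncard_le_ncard hsub (Finset.finite_toSet _)
    rw [Set.ncard_coe_finset, Pi.card_Icc] at h1
    have h2 : ((Int.toNat ((m : ℤ) + 1 - -(m : ℤ)) : ℕ)) = 2 * m + 1 := by omega
    simp only [Int.card_Icc, h2, Finset.prod_const, Finset.card_univ, Fintype.card_fin] at h1
    have hmR : (m : ℝ) ≤ R * M := Nat.floor_le hRM.le
    calc ((latticePts B R).ncard : ℝ) ≤ ((2 * m + 1 : ℕ) : ℝ) ^ d := by exact_mod_cast h1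
      _ ≤ (3 * M * R) ^ d := by
        gcongr
        push_cast
        nlinarith
      _ = _ := mul_pow _ _ _

lemma primPts_subset {d : ℕ} (B : Set (Fin d → ℝ)) (R : ℝ) : primPts B R ⊆ latticePts B R :=
  fun _ hx => ⟨hx.1, hx.2.2⟩

/-- Multiplication by `k` identifies primitive points of `(R / k) • B` with the points of
`R • B` of content `k`. -/
lemma ncard_primPts {d : ℕ} (B : Set (Fin d → ℝ)) (R : ℝ) (k : ℕ+) :
    (primPts B (R / (k : ℕ))).ncard = {x ∈ latticePts B R | content x = k}.ncard := by
  have hk : ((k : ℕ) : ℝ) ≠ 0 := by exact_mod_cast k.ne_zero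
  have hkz : ((k : ℕ) : ℤ) ≠ 0 := by exact_mod_cast k.ne_zero
  have hinj : Function.Injective fun (x : Fin d → ℤ) (i : Fin d) => ((k : ℕ) : ℤ) * x i := by
    intro x y hxy
    funext i
    exact mul_left_cancel₀ hkz (congrFun hxy i)
  have hmem : ∀ x : Fin d → ℤ, (fun i => ((((k : ℕ) : ℤ) * x i : ℤ) : ℝ)) ∈ R • B ↔
      (fun i => (x i : ℝ)) ∈ (R / (k : ℕ)) • B := by
    intro x
    simp only [Set.mem_smul_set]
    refine exists_congr fun y => and_congr_right fun _ => ?_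
    simp only [funext_iff, Pi.smul_apply, smul_eq_mul]
    refine forall_congr' fun i => ?_
    push_cast
    constructor
    · intro h; field_simp; linarith
    · intro h; rw [← h]; field_simp
  rw [← Set.ncard_image_of_injective _ hinj]
  congr 1
  ext x
  constructor
  · rintro ⟨y, ⟨hy0, hy1, hyB⟩, rfl⟩
    have hc : content (fun i => ((k : ℕ) : ℤ) * y i) = k := by
      rw [content_smul, show content y = 1 from hy1, mul_one]
    refine ⟨⟨fun h => ?_, (hmem y).2 hyB⟩, hc⟩
    rw [content_eq_zero.2 h] at hc
    exact k.ne_zero hc.symm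
  · rintro ⟨⟨hx0, hxB⟩, hc⟩
    choose y hy using content_dvd x
    rw [hc] at hy
    obtain rfl : x = fun i => ((k : ℕ) : ℤ) * y i := funext hy
    rw [content_smul] at hc
    have hc1 : content y = 1 := Nat.eq_of_mul_eq_mul_left k.pos (by rw [hc, mul_one])
    refine ⟨y, ⟨fun h => ?_, hc1, (hmem y).1 hxB⟩, rfl⟩
    rw [content_eq_zero.2 h] at hc1
    exact zero_ne_one hc1

/-- Sorting the nonzero integer points of `R • B` by content. -/
lemma hasSum_primitive {d : ℕ} {B : Set (Fin d → ℝ)} {R : ℝ} (hfin : (latticePts B R).Finite) :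
    HasSum (fun k : ℕ+ => ((primPts B (R / (k : ℕ))).ncard : ℝ)) (latticePts B R).ncard := by
  classical
  have h : ∀ x ∈ hfin.toFinset,
      HasSum (fun k : ℕ+ => if content x = (k : ℕ) then (1 : ℝ) else 0) 1 := by
    intro x hx
    have hx0 : content x ≠ 0 := fun h => (hfin.mem_toFinset.1 hx).1 (content_eq_zero.1 h)
    obtain ⟨n, hn⟩ : ∃ n : ℕ+, (n : ℕ) = content x := ⟨⟨_, Nat.pos_of_ne_zero hx0⟩, rfl⟩
    have hk : (fun k : ℕ+ => if content x = (k : ℕ) then (1 : ℝ) else 0)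
        = fun k => if k = n then 1 else 0 := by
      funext k
      refine if_congr ?_ rfl rfl
      rw [← hn, PNat.coe_inj, eq_comm]
    rw [hk]
    exact hasSum_ite_eq _ _
  convert hasSum_sum h using 1
  · funext k
    rw [ncard_primPts, Finset.sum_boole, ← Set.ncard_coe_finset]
    congr 2
    ext x
    simp
  · rw [Finset.sum_const, nsmul_one, Set.ncard_eq_toFinset_card _ hfin]

/-- Removing the origin changes the number of integer points by a constant. -/
lemma exists_origin {d : ℕ} {B : Set (Fin d → ℝ)}
    (hfin : ∀ R, 0 < R → (latticePts B R).Finite) :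
    ∃ c : ℝ, ∀ R : ℝ, 0 < R →
      (Nat.card {x : Fin d → ℤ | (fun i => (x i : ℝ)) ∈ R • B} : ℝ)
        = (latticePts B R).ncard + c := by
  classical
  refine ⟨if (0 : Fin d → ℝ) ∈ B then 1 else 0, fun R hR => ?_⟩
  have h0 : (fun i => (((0 : Fin d → ℤ) i : ℤ) : ℝ)) ∈ R • B ↔ (0 : Fin d → ℝ) ∈ B := by
    have : (fun i => (((0 : Fin d → ℤ) i : ℤ) : ℝ)) = R • (0 : Fin d → ℝ) := by
      funext i; simp
    rw [this, Set.smul_mem_smul_set_iff₀ hR.ne']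
  rw [Nat.card_coe_set_eq]
  split_ifs with h
  · have : {x : Fin d → ℤ | (fun i => (x i : ℝ)) ∈ R • B} = insert 0 (latticePts B R) := by
      ext x
      by_cases hx : x = 0
      · subst hx; simpa using h0.2 h
      · simp [latticePts, hx]
    rw [this, Set.ncard_insert_of_notMem (fun h => h.1 rfl) (hfin R hR)]
    push_cast; ring
  · have : {x : Fin d → ℤ | (fun i => (x i : ℝ)) ∈ R • B} = latticePts B R := by
      ext x
      by_cases hx : x = 0
      · subst hx
        exact ⟨fun h' => absurd (h0.1 h') h, fun h' => absurd rfl h'.1⟩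
      · simp [latticePts, hx]
    rw [this, add_zero]

end PrimitivePoints

/-! ### Transfer between the two error terms -/

open PrimitivePoints

theorem stmt7 (d : ℕ) (hd : 3 ≤ d) (B : Set (Fin d → ℝ))
    (hBm : MeasurableSet B) (hBb : Bornology.IsBounded B)
    (hstar : ∀ x ∈ B, ∀ t : ℝ, t ∈ Set.Icc (0 : ℝ) 1 → t • x ∈ B)
    (hvol : 0 < (volume B).toReal)
    (α : ℝ) (hα₁ : 1 < α) (hαd : α ≤ d)
    (E₀ E₁ : ℝ → ℝ)
    (hE₀ : ∀ R : ℝ, E₀ R = (Nat.card {x : Fin d → ℤ | (fun i => (x i : ℝ)) ∈ R • B} : ℝ)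
        - (volume B).toReal * R ^ d)
    (hE₁ : ∀ R : ℝ, E₁ R = (Nat.card {x : Fin d → ℤ | x ≠ 0 ∧
          Finset.univ.gcd (fun i => (x i).natAbs) = 1 ∧ (fun i => (x i : ℝ)) ∈ R • B} : ℝ)
        - ((volume B).toReal / (∑' n : ℕ, 1 / ((n : ℝ) + 1) ^ d)) * R ^ d) :
    (E₀ =o[atTop] fun R : ℝ => R ^ α) ↔ (E₁ =o[atTop] fun R : ℝ => R ^ α) := by
  obtain ⟨M, hM, hBM⟩ : ∃ M : ℝ, 0 < M ∧ ∀ x ∈ B, ∀ i, |x i| ≤ M := by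
    obtain ⟨M, hM, h⟩ := hBb.exists_pos_norm_le
    exact ⟨M, hM, fun x hx i => (norm_le_pi_norm x i).trans (h x hx)⟩
  have hfin : ∀ R, 0 < R → (latticePts B R).Finite := fun R hR => (card_le hM hBM hR).1
  obtain ⟨c, hc⟩ := exists_origin hfin
  set V := (volume B).toReal with hV
  have hζ : (∑' n : ℕ, 1 / ((n : ℝ) + 1) ^ d) = ∑' k : ℕ+, 1 / ((k : ℕ) : ℝ) ^ d := by
    rw [tsum_pnat_eq_tsum_succ (f := fun n : ℕ => 1 / (n : ℝ) ^ d)]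
    exact tsum_congr fun n => by push_cast; rfl
  set Z := ∑' n : ℕ, 1 / ((n : ℝ) + 1) ^ d with hZ
  have hsum := summable_pnat_pow (d := d) (by omega)
  have hZpos : 0 < Z := by
    rw [hζ]
    exact hsum.tsum_pos (fun k => by positivity) 1 (by simp)
  have hE₁' : ∀ R, E₁ R = ((primPts B R).ncard : ℝ) - V / Z * R ^ d := fun R => by
    rw [hE₁, ← Nat.card_coe_set_eq]; rfl
  have hC₁ : ∀ r, 0 < r → |E₁ r| ≤ ((3 * M) ^ d + V / Z) * r ^ d := by
    intro r hr
    obtain ⟨hf, hle⟩ := card_le hM hBM hr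
    have h1 : ((primPts B r).ncard : ℝ) ≤ (latticePts B r).ncard := by
      exact_mod_cast Set.ncard_le_ncard (primPts_subset B r) hf
    have h2 : 0 ≤ V / Z * r ^ d := by positivity
    have h3 : (0 : ℝ) ≤ (primPts B r).ncard := by positivity
    have h4 : 0 ≤ (3 * M) ^ d * r ^ d := by positivity
    rw [hE₁', abs_le]
    constructor <;> nlinarith
  have hsumE : ∀ R, 0 < R → HasSum (fun k : ℕ+ => E₁ (R / (k : ℕ))) (E₀ R - c) := by
    intro R hR
    have h1 := (hasSum_primitive (hfin R hR)).sub (hsum.hasSum.mul_left (V / Z * R ^ d))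
    rw [← hζ] at h1
    have h2 : (fun k : ℕ+ => E₁ (R / (k : ℕ))) = fun k : ℕ+ =>
        ((primPts B (R / (k : ℕ))).ncard : ℝ) - V / Z * R ^ d * (1 / ((k : ℕ) : ℝ) ^ d) := by
      funext k
      rw [hE₁', div_pow]; ring
    have h3 : E₀ R - c = (latticePts B R).ncard - V / Z * R ^ d * Z := by
      rw [hE₀, hc R hR]
      field_simp
      ring
    rw [h2, h3]
    exact h1
  set C₀ := ((3 * M) ^ d + V / Z) * Z with hC₀def
  have hC₀ : ∀ r, 0 < r → |E₀ r - c| ≤ C₀ * r ^ d := by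
    intro r hr
    have hs := hsum.hasSum.mul_left (((3 * M) ^ d + V / Z) * r ^ d)
    rw [← hζ] at hs
    have h1 := tsum_of_norm_bounded hs (f := fun k : ℕ+ => E₁ (r / (k : ℕ))) fun k => by
      have hk : (0 : ℝ) < (k : ℕ) := by exact_mod_cast k.pos
      refine (hC₁ _ (div_pos hr hk)).trans (le_of_eq ?_)
      rw [div_pow]; ring
    rw [(hsumE r hr).tsum_eq, Real.norm_eq_abs] at h1
    exact h1.trans (le_of_eq (by rw [hC₀def]; ring))
  -- `0 < α`, so the contribution `c` of the origin is negligible.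
  have hconst : (fun _ : ℝ => c) =o[atTop] fun R : ℝ => R ^ α :=
    isLittleO_const_left.2 (Or.inr (tendsto_norm_atTop_atTop.comp
      (tendsto_rpow_atTop (by linarith))))
  constructor
  · intro h
    refine (isLittleO_tsum hα₁ hαd hC₀ (fun k => ((μ (k : ℕ) : ℤ) : ℝ)) abs_moebius_le_one
      (h.sub hconst)).congr' ?_ EventuallyEq.rfl
    filter_upwards [eventually_gt_atTop 0] with R hR
    exact moebius_inversion (g := fun r => E₀ r - c) (by omega) hC₁
      (fun r hr => (hsumE r hr).tsum_eq.symm) hR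
  · intro h
    have h1 := isLittleO_tsum hα₁ hαd hC₁ (fun _ => 1) (fun _ => by simp) h
    refine (h1.add hconst).congr' ?_ EventuallyEq.rfl
    filter_upwards [eventually_gt_atTop 0] with R hR
    simp only [one_mul]
    rw [(hsumE R hR).tsum_eq, sub_add_cancel]
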